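/- Let d ≥ 3 and let D ⊂ ℝ^d be a strongly convex domain. Then there exists A ≥ 1 such that g_D(x,v) ≤ A h_D(x,v) for all x ∈ D and v ∈ ℝ^d. -/

import Mathlib

/-!
Flat disks suffice for the upper bound. Let `x ∈ D`, let `p` be the nearest point of the complement,
`δ = ‖x - p‖` and `n = (p - x) / δ`. Since `∂D` is compact and `C²`, `D` contains the ball of some
uniform radius `ρ` tangent to `∂D` at `p` (Taylor expansion of the defining function with bounded
Hessian). By strong convexity, `D` is contained in a ball of uniform radius `C / 2` tangent to `∂D`
at `p`: the estimate close to `p` is `exterior_local`, and convexity propagates it along rays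
from `p`. Both facts are collected in `exists_uniform_balls`.

Let `s` be the smaller of the two chord parameters of `v` at `x`. The exterior ball forces
`s * |⟪v, n⟫| ≤ δ` and `(s * ‖v‖) ^ 2 ≤ 3 * C * δ`. As `d ≥ 3`, there is `w` orthogonal to `v` and
`n` with `‖w‖ = ‖v‖`. The normal displacement of the flat disk of radius `κ * s` spanned by `v`
and `w` then comes from `v` only, so the two bounds place this disk in the interior ball (or, when
`δ > ρ / 2`, in the ball `B(x, δ)`) for a suitable `κ` depending only on `ρ` and `C`
(`minMetric_le_of_balls`). Hence `minMetric D x v ≤ 1 / (κ * s) ≤ (2 / κ) * hilbertFinsler D x v`.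
-/

open scoped RealInnerProductSpace ENNReal
open Metric Set Filter

noncomputable section

/-- Euclidean space `ℝ^d`. -/
abbrev Euc (d : ℕ) := EuclideanSpace ℝ (Fin d)

/-- The open unit disk in `ℝ²`. -/
def unitDisk : Set (Euc 2) := Metric.ball 0 1

/-- Partial derivative of `f` at `z` in the `i`-th coordinate direction. -/
def pd {d : ℕ} (i : Fin 2) (f : Euc 2 → Euc d) (z : Euc 2) : Euc d :=
  fderiv ℝ f z (EuclideanSpace.single i 1)

/-- `f` is a conformal harmonic map on the unit disk: it is `C²`, its (vector)
Laplacian vanishes (equivalently, every component is harmonic), and at each point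
its two partial derivatives are orthogonal and of equal norm. -/
def ConformalHarmonicOnDisk {d : ℕ} (f : Euc 2 → Euc d) : Prop :=
  ContDiffOn ℝ 2 f unitDisk ∧
  (∀ z ∈ unitDisk,
    fderiv ℝ (pd 0 f) z (EuclideanSpace.single 0 1)
      + fderiv ℝ (pd 1 f) z (EuclideanSpace.single 1 1) = 0) ∧
  (∀ z ∈ unitDisk, ‖pd 0 f z‖ = ‖pd 1 f z‖ ∧ ⟪pd 0 f z, pd 1 f z⟫ = 0)

/-- The minimal (Forstnerič–Kalaj) metric of a domain `D ⊆ ℝ^d`: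
`g_D(x,v) = inf {1/r : r > 0, f ∈ CH(𝔻, D), f 0 = x, f_x 0 = r • v}`. -/
def minMetric {d : ℕ} (D : Set (Euc d)) (x v : Euc d) : ℝ :=
  sInf {c : ℝ | ∃ r : ℝ, 0 < r ∧ c = 1 / r ∧
    ∃ f : Euc 2 → Euc d, ConformalHarmonicOnDisk f ∧ (∀ z ∈ unitDisk, f z ∈ D) ∧
      f 0 = x ∧ pd 0 f 0 = r • v}

/-- `γ` is a piecewise `C¹` curve on `[a, b]`. -/
def PiecewiseC1On {d : ℕ} (γ : ℝ → Euc d) (a b : ℝ) : Prop :=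
  ContinuousOn γ (Set.Icc a b) ∧
  ∃ (n : ℕ) (t : Fin (n + 2) → ℝ), Monotone t ∧ t 0 = a ∧ t (Fin.last (n + 1)) = b ∧
    ∀ i : Fin (n + 1), ContDiffOn ℝ 1 γ (Set.Icc (t i.castSucc) (t i.succ))

/-- The minimal pseudodistance `ρ_D`: infimum of minimal lengths of piecewise `C¹`
curves in `D` joining `x` to `y`. -/
def minDist {d : ℕ} (D : Set (Euc d)) (x y : Euc d) : ℝ :=
  sInf {L : ℝ | ∃ γ : ℝ → Euc d, PiecewiseC1On γ 0 1 ∧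
    (∀ t ∈ Set.Icc (0:ℝ) 1, γ t ∈ D) ∧ γ 0 = x ∧ γ 1 = y ∧
    L = ∫ t in (0:ℝ)..(1:ℝ), minMetric D (γ t) (deriv γ t)}

/-- The Gromov product `(x|y)_o` with respect to the minimal pseudodistance of `D`. -/
def gromovProd {d : ℕ} (D : Set (Euc d)) (o x y : Euc d) : ℝ :=
  (minDist D x o + minDist D y o - minDist D x y) / 2

/-- `D` is hyperbolic: the minimal pseudodistance is a genuine distance. -/
def MinHyperbolic {d : ℕ} (D : Set (Euc d)) : Prop :=
  ∀ x ∈ D, ∀ y ∈ D, x ≠ y → 0 < minDist D x y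

/-- The Hessian quadratic form of `u` at `x` in direction `v`. -/
def hessQ {d : ℕ} (u : Euc d → ℝ) (x v : Euc d) : ℝ :=
  fderiv ℝ (fun y => fderiv ℝ u y v) x v

/-- `D` is a bounded domain with `C²` boundary, described by a `C²` defining
function `u` on a neighborhood `U` of `∂D` with nonvanishing differential. -/
def IsC2BoundedDomain {d : ℕ} (D : Set (Euc d)) : Prop :=
  IsOpen D ∧ IsConnected D ∧ Bornology.IsBounded D ∧
  ∃ (U : Set (Euc d)) (u : Euc d → ℝ), IsOpen U ∧ frontier D ⊆ U ∧ ContDiffOn ℝ 2 u U ∧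
    D ∩ U = {x | x ∈ U ∧ u x < 0} ∧ frontier D = {x | x ∈ U ∧ u x = 0} ∧
    ∀ x ∈ frontier D, fderiv ℝ u x ≠ 0

/-- `D` is a bounded strongly minimally convex domain: it has a `C²` defining function
which is strongly minimally plurisubharmonic near `∂D`, i.e. the trace of its Hessian
on every 2-plane (spanned by an orthonormal pair `v, w`) is strictly positive. -/
def IsStronglyMinimallyConvex {d : ℕ} (D : Set (Euc d)) : Prop :=
  IsOpen D ∧ IsConnected D ∧ Bornology.IsBounded D ∧
  ∃ (U : Set (Euc d)) (u : Euc d → ℝ), IsOpen U ∧ frontier D ⊆ U ∧ ContDiffOn ℝ 2 u U ∧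
    D ∩ U = {x | x ∈ U ∧ u x < 0} ∧ frontier D = {x | x ∈ U ∧ u x = 0} ∧
    (∀ x ∈ frontier D, fderiv ℝ u x ≠ 0) ∧
    (∀ x ∈ U, ∀ v w : Euc d, ‖v‖ = 1 → ‖w‖ = 1 → ⟪v, w⟫ = 0 →
      0 < hessQ u x v + hessQ u x w)

/-- `D` is a bounded strongly convex domain: convex, with a `C²` defining function whose
Hessian is positive definite on the tangent space at every boundary point
(equivalently, all principal curvatures of `∂D` w.r.t. the inner normal are positive). -/
def IsStronglyConvexDomain {d : ℕ} (D : Set (Euc d)) : Prop :=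
  IsOpen D ∧ IsConnected D ∧ Bornology.IsBounded D ∧ Convex ℝ D ∧
  ∃ (U : Set (Euc d)) (u : Euc d → ℝ), IsOpen U ∧ frontier D ⊆ U ∧ ContDiffOn ℝ 2 u U ∧
    D ∩ U = {x | x ∈ U ∧ u x < 0} ∧ frontier D = {x | x ∈ U ∧ u x = 0} ∧
    (∀ x ∈ frontier D, fderiv ℝ u x ≠ 0) ∧
    (∀ ξ ∈ frontier D, ∀ w : Euc d, w ≠ 0 → fderiv ℝ u ξ w = 0 → 0 < hessQ u ξ w)

/-- For `x ∈ D` with nearest boundary point `p`, the outer unit normal direction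
`n_{π(x)} = (p - x)/‖p - x‖`. -/
def nvec {d : ℕ} (x p : Euc d) : Euc d := ‖p - x‖⁻¹ • (p - x)

/-- Normal component of `v` at `x` with nearest boundary point `p`. -/
def vN {d : ℕ} (x p v : Euc d) : Euc d := ⟪v, nvec x p⟫ • nvec x p

/-- Tangential component of `v` at `x` with nearest boundary point `p`. -/
def vT {d : ℕ} (x p v : Euc d) : Euc d := v - vN x p v

/-- The intrinsic distance `H` on the boundary `∂D`: infimum of Euclidean lengths of
piecewise `C¹` curves in `∂D` joining two boundary points. -/
def bdist {d : ℕ} (D : Set (Euc d)) (ξ η : Euc d) : ℝ :=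
  sInf {L : ℝ | ∃ α : ℝ → Euc d, PiecewiseC1On α 0 1 ∧
    (∀ t ∈ Set.Icc (0:ℝ) 1, α t ∈ frontier D) ∧ α 0 = ξ ∧ α 1 = η ∧
    L = ∫ t in (0:ℝ)..(1:ℝ), ‖deriv α t‖}

/-- `h(x) = δ_D(x)^{1/2}`. -/
def hfun {d : ℕ} (D : Set (Euc d)) (x : Euc d) : ℝ :=
  Real.sqrt (Metric.infDist x (frontier D))

/-- The length of a curve with respect to the boundary Finsler metric
`F(x,v) = ‖v_N‖/(2 δ_D(x)) + ‖v_T‖/δ_D(x)^{1/2}`. -/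
def Flen {d : ℕ} (D : Set (Euc d)) (π : Euc d → Euc d) (γ : ℝ → Euc d) : ℝ :=
  ∫ t in (0:ℝ)..(1:ℝ),
    (‖vN (γ t) (π (γ t)) (deriv γ t)‖ / (2 * Metric.infDist (γ t) (frontier D))
      + ‖vT (γ t) (π (γ t)) (deriv γ t)‖ / Real.sqrt (Metric.infDist (γ t) (frontier D)))

/-- The filling Finsler metric `F`: the boundary Finsler metric on
`N = {δ_D ≤ ε}` and `c‖v‖` elsewhere. -/
def Fmet {d : ℕ} (D : Set (Euc d)) (π : Euc d → Euc d) (ε c : ℝ) (x v : Euc d) : ℝ :=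
  if Metric.infDist x (frontier D) ≤ ε then
    ‖vN x (π x) v‖ / (2 * Metric.infDist x (frontier D))
      + ‖vT x (π x) v‖ / Real.sqrt (Metric.infDist x (frontier D))
  else c * ‖v‖

/-- The intrinsic distance `d_F` associated to the filling Finsler metric `F`. -/
def dF {d : ℕ} (D : Set (Euc d)) (π : Euc d → Euc d) (ε c : ℝ) (x y : Euc d) : ℝ :=
  sInf {L : ℝ | ∃ γ : ℝ → Euc d, PiecewiseC1On γ 0 1 ∧
    (∀ t ∈ Set.Icc (0:ℝ) 1, γ t ∈ D) ∧ γ 0 = x ∧ γ 1 = y ∧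
    L = ∫ t in (0:ℝ)..(1:ℝ), Fmet D π ε c (γ t) (deriv γ t)}

/-- The hyperbolic filling distance
`d_H(x,y) = 2 log((H(π x, π y) + h(x) ∨ h(y)) / √(h(x) h(y)))`. -/
def dH {d : ℕ} (D : Set (Euc d)) (π : Euc d → Euc d) (x y : Euc d) : ℝ :=
  2 * Real.log ((bdist D (π x) (π y) + max (hfun D x) (hfun D y)) /
    Real.sqrt (hfun D x * hfun D y))

/-- `δ̂_D(x,v)`: the supremum over 2-dimensional linear subspaces `Λ ∋ v` of the
distance (in `ℝ≥0∞`, so `∞` if `x + Λ ⊆ D`) from `x` to `(x + Λ) \ D`. -/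
def deltaHat {d : ℕ} (D : Set (Euc d)) (x v : Euc d) : ℝ≥0∞ :=
  ⨆ (Λ : Submodule ℝ (Euc d)) (_ : Module.finrank ℝ Λ = 2) (_ : v ∈ Λ),
    ⨅ (y : Euc d) (_ : y - x ∈ Λ ∧ y ∉ D), edist x y

/-- The positive parameter at which the ray `t ↦ x + t • v` exits the convex domain `D`
(equal to `0`, by the `sInf ∅ = 0` convention, when the ray stays in `D`,
i.e. when the corresponding chord endpoint is the point at infinity). -/
def chordParam {d : ℕ} (D : Set (Euc d)) (x v : Euc d) : ℝ :=
  sInf {s : ℝ | 0 < s ∧ x + s • v ∉ D}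

/-- The Hilbert Finsler metric `h_D(x,v) = (‖v‖/2)(1/‖x-a‖ + 1/‖x-b‖)` of a convex
domain, with the convention `1/‖x-∞‖ = 0` (here `‖x-b‖ = chordParam D x v • ‖v‖` and
`‖x-a‖ = chordParam D x (-v) • ‖v‖`, and division by zero is zero). -/
def hilbertFinsler {d : ℕ} (D : Set (Euc d)) (x v : Euc d) : ℝ :=
  (1/2) * (1 / chordParam D x v + 1 / chordParam D x (-v))

/- The Hilbert distance of a convex domain: for `x ≠ y`,
`H_D(x,y) = ½ log((‖x-b‖ ‖y-a‖)/(‖x-a‖ ‖y-b‖))` where `a, x, y, b` are aligned on the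
chord through `x, y`, with the convention that ratios involving the point at infinity
(detected by `chordParam = 0`) are equal to `1`. -/
open Classical in
def hilbertDist {d : ℕ} (D : Set (Euc d)) (x y : Euc d) : ℝ :=
  if x = y then 0 else
    (1/2) * Real.log
      ((if chordParam D x (y - x) = 0 then 1
        else chordParam D x (y - x) / (chordParam D x (y - x) - 1)) *
       (if chordParam D x (x - y) = 0 then 1
        else (1 + chordParam D x (x - y)) / chordParam D x (x - y)))

/-! ### Second-order estimates for the defining function -/

lemma hessQ_eq {d : ℕ} {U : Set (Euc d)} {u : Euc d → ℝ} (hU : IsOpen U)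
    (hu : ContDiffOn ℝ 2 u U) {x : Euc d} (hx : x ∈ U) (v : Euc d) :
    hessQ u x v = fderiv ℝ (fderiv ℝ u) x v v := by
  have h1 : ContDiffAt ℝ 2 u x := hu.contDiffAt (hU.mem_nhds hx)
  have h2 : DifferentiableAt ℝ (fderiv ℝ u) x :=
    (h1.fderiv_right (m := 1) (by norm_num)).differentiableAt (by norm_num)
  unfold hessQ
  rw [fderiv_clm_apply h2 (differentiableAt_const v)]
  simp

/-- Second-order Taylor bound along the segment `[p, p + w]`: the mean value theorem applied to
`s ↦ u (p + s • w) - s * du_p(w) - (a / 2) * s ^ 2` and to its derivative. -/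
lemma taylor_lower {d : ℕ} {U : Set (Euc d)} {u : Euc d → ℝ} (hU : IsOpen U)
    (hu : ContDiffOn ℝ 2 u U) {p w : Euc d} {a : ℝ}
    (hseg : ∀ s ∈ Icc (0:ℝ) 1, p + s • w ∈ U)
    (ha : ∀ s ∈ Icc (0:ℝ) 1, a ≤ fderiv ℝ (fderiv ℝ u) (p + s • w) w w) :
    u p + fderiv ℝ u p w + a / 2 ≤ u (p + w) := by
  have hline : ∀ s : ℝ, HasDerivAt (fun s : ℝ => p + s • w) w s := fun s => by
    simpa using ((hasDerivAt_id s).smul_const w).const_add p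
  have hd1 : ∀ s ∈ Icc (0:ℝ) 1,
      HasDerivAt (fun s : ℝ => u (p + s • w)) (fderiv ℝ u (p + s • w) w) s := by
    intro s hs
    have h1 : ContDiffAt ℝ 2 u (p + s • w) := hu.contDiffAt (hU.mem_nhds (hseg s hs))
    exact ((h1.differentiableAt (by norm_num)).hasFDerivAt).comp_hasDerivAt s (hline s)
  have hd2 : ∀ s ∈ Icc (0:ℝ) 1,
      HasDerivAt (fun s : ℝ => fderiv ℝ u (p + s • w) w)
        (fderiv ℝ (fderiv ℝ u) (p + s • w) w w) s := by
    intro s hs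
    have h1 : ContDiffAt ℝ 2 u (p + s • w) := hu.contDiffAt (hU.mem_nhds (hseg s hs))
    have h2 : DifferentiableAt ℝ (fderiv ℝ u) (p + s • w) :=
      (h1.fderiv_right (m := 1) (by norm_num)).differentiableAt (by norm_num)
    have h3 := h2.hasFDerivAt.comp_hasDerivAt s (hline s)
    simpa using h3.clm_apply (hasDerivAt_const s w)
  have hfirst : ∀ s ∈ Icc (0:ℝ) 1, fderiv ℝ u p w + a * s ≤ fderiv ℝ u (p + s • w) w := by
    intro s hs
    rcases hs.1.eq_or_lt with h0 | h0
    · simp [← h0]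
    have hsub : ∀ t ∈ Icc (0:ℝ) s, t ∈ Icc (0:ℝ) 1 := fun t ht => ⟨ht.1, ht.2.trans hs.2⟩
    obtain ⟨t, ht, he⟩ := exists_hasDerivAt_eq_slope
      (fun s : ℝ => fderiv ℝ u (p + s • w) w) _ h0
      (fun t ht => (hd2 t (hsub t ht)).continuousAt.continuousWithinAt)
      (fun t ht => hd2 t (hsub t (Ioo_subset_Icc_self ht)))
    have := ha t (hsub t (Ioo_subset_Icc_self ht))
    rw [he, le_div_iff₀ (by linarith)] at this
    simp at this
    linarith
  have hd3 : ∀ s ∈ Icc (0:ℝ) 1,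
      HasDerivAt (fun s : ℝ => u (p + s • w) - fderiv ℝ u p w * s - a / 2 * s ^ 2)
        (fderiv ℝ u (p + s • w) w - fderiv ℝ u p w - a * s) s := by
    intro s hs
    have := ((hd1 s hs).sub ((hasDerivAt_id s).const_mul (fderiv ℝ u p w))).sub
      ((hasDerivAt_pow 2 s).const_mul (a / 2))
    exact this.congr_deriv (by norm_num; ring)
  obtain ⟨t, ht, he⟩ := exists_hasDerivAt_eq_slope _ _ zero_lt_one
      (fun t ht => (hd3 t ht).continuousAt.continuousWithinAt)
      (fun t ht => hd3 t (Ioo_subset_Icc_self ht))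
  have := hfirst t (Ioo_subset_Icc_self ht)
  simp at he
  linarith

lemma taylor_upper {d : ℕ} {U : Set (Euc d)} {u : Euc d → ℝ} (hU : IsOpen U)
    (hu : ContDiffOn ℝ 2 u U) {p w : Euc d} {a : ℝ}
    (hseg : ∀ s ∈ Icc (0:ℝ) 1, p + s • w ∈ U)
    (ha : ∀ s ∈ Icc (0:ℝ) 1, fderiv ℝ (fderiv ℝ u) (p + s • w) w w ≤ a) :
    u (p + w) ≤ u p + fderiv ℝ u p w + a / 2 := by
  have hf : fderiv ℝ (-u) = -fderiv ℝ u := by ext1 x; simp [fderiv_neg]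
  have := taylor_lower hU hu.neg (p := p) (w := w) (a := -a) hseg (by
    intro s hs
    change _ ≤ fderiv ℝ (fderiv ℝ (-u)) _ w w
    rw [hf, fderiv_neg]
    simpa using ha s hs)
  change (-u) p + fderiv ℝ (-u) p w + _ ≤ (-u) _ at this
  rw [hf] at this
  simp at this
  linarith

/-- `D` lies in the half-space below its tangent hyperplane at a boundary point `p`. -/
lemma fderiv_nonpos {d : ℕ} {D U : Set (Euc d)} {u : Euc d → ℝ} (hDo : IsOpen D)
    (hDc : Convex ℝ D) (hU : IsOpen U) (hu : ContDiffOn ℝ 2 u U)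
    (hDU : D ∩ U = {x | x ∈ U ∧ u x < 0}) {p : Euc d} (hpD : p ∈ closure D) (hpU : p ∈ U)
    (hp0 : u p = 0) {y : Euc d} (hy : y ∈ D) : fderiv ℝ u p (y - p) ≤ 0 := by
  have hline : HasDerivAt (fun s : ℝ => p + s • (y - p)) (y - p) 0 := by
    simpa using ((hasDerivAt_id (0:ℝ)).smul_const (y - p)).const_add p
  have hdu : DifferentiableAt ℝ u (p + (0:ℝ) • (y - p)) := by
    simpa using (hu.contDiffAt (hU.mem_nhds hpU)).differentiableAt (by norm_num)
  have h1 := hdu.hasFDerivAt.comp_hasDerivAt (0:ℝ) hline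
  have h2 := h1.hasDerivWithinAt (s := Ioi 0)
  have h3 := hasDerivWithinAt_iff_tendsto_slope' (by simp) |>.1 h2
  simp only [zero_smul, add_zero] at h3
  refine le_of_tendsto h3 ?_
  have hUe : ∀ᶠ s : ℝ in nhdsWithin 0 (Ioi 0), p + s • (y - p) ∈ U := by
    refine (hline.continuousAt.eventually_mem (hU.mem_nhds (by simpa))).filter_mono
      nhdsWithin_le_nhds
  have h01 : ∀ᶠ s : ℝ in nhdsWithin 0 (Ioi 0), s ∈ Ioo (0:ℝ) 1 :=
    Ioo_mem_nhdsGT zero_lt_one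
  filter_upwards [hUe, h01] with s hsU hs
  have hsD : p + s • (y - p) ∈ D := by
    have := hDc.combo_closure_interior_mem_interior hpD (by rwa [hDo.interior_eq])
      (a := 1 - s) (b := s) (by linarith [hs.2]) hs.1 (by ring)
    rw [hDo.interior_eq] at this
    convert this using 1
    module
  have : p + s • (y - p) ∈ D ∩ U := ⟨hsD, hsU⟩
  rw [hDU] at this
  simp only [slope, vsub_eq_sub, smul_eq_mul, Function.comp, zero_smul, add_zero, hp0, sub_zero]
  exact mul_nonpos_of_nonneg_of_nonpos (inv_nonneg.2 hs.1.le) this.2.le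

/-- Uniform local strong convexity: `D` separates quadratically from its tangent hyperplanes. If
not, there are `p n ∈ ∂D` and `y n ∈ D` with `‖y n - p n‖ → 0` violating the estimate; a limit
`(p₀, w₀)` of the pairs (`p n`, direction of `y n - p n`) has `du_{p₀}(w₀) = 0`, so the Hessian is
positive at `(p₀, w₀)`, and Taylor expansion gives `u (y n) > 0` for some `n`, against
`y n ∈ D`. -/
lemma exterior_local {d : ℕ} {D U : Set (Euc d)} {u : Euc d → ℝ} (hDo : IsOpen D)
    (hDb : Bornology.IsBounded D)
    (hDc : Convex ℝ D) (hU : IsOpen U) (hFU : frontier D ⊆ U) (hu : ContDiffOn ℝ 2 u U)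
    (hDU : D ∩ U = {x | x ∈ U ∧ u x < 0}) (hF : frontier D = {x | x ∈ U ∧ u x = 0})
    (hpos : ∀ ξ ∈ frontier D, ∀ w : Euc d, w ≠ 0 → fderiv ℝ u ξ w = 0 → 0 < hessQ u ξ w) :
    ∃ c > 0, ∀ p ∈ frontier D, ∀ y ∈ D, ‖y - p‖ ≤ c →
      c * ‖y - p‖ ^ 2 ≤ - fderiv ℝ u p (y - p) := by
  by_contra! hcon
  have hn : ∀ n : ℕ, (0:ℝ) < 1 / ((n:ℝ) + 1) := fun n => by positivity
  choose p hp y hy hyp hlt using fun n : ℕ => hcon (1 / ((n:ℝ) + 1)) (hn n)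
  have hne : ∀ n, 0 < ‖y n - p n‖ := by
    intro n
    rw [norm_pos_iff, sub_ne_zero]
    rintro h
    have := (hp n).2
    rw [hDo.interior_eq, ← h] at this
    exact this (hy n)
  set w : ℕ → Euc d := fun n => ‖y n - p n‖⁻¹ • (y n - p n) with hw
  have hws : ∀ n, w n ∈ sphere (0 : Euc d) 1 := by
    intro n
    simp [hw, norm_smul, (hne n).ne']
  have hyw : ∀ n, y n - p n = ‖y n - p n‖ • w n := by
    intro n
    rw [hw, smul_smul, mul_inv_cancel₀ (hne n).ne', one_smul]
  have hFc : IsCompact (frontier D) :=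
    (hDb.closure.isCompact_closure).of_isClosed_subset isClosed_frontier
      (frontier_subset_closure.trans subset_closure)
  obtain ⟨⟨p₀, w₀⟩, ⟨hp₀, hw₀⟩, φ, hφ, hlim⟩ :=
    (hFc.prod (isCompact_sphere (0 : Euc d) 1)).tendsto_subseq
      (x := fun n => (p n, w n)) (fun n => ⟨hp n, hws n⟩)
  simp only at hp₀ hw₀
  have hlp : Tendsto (fun n => p (φ n)) atTop (nhds p₀) :=
    (continuous_fst.tendsto _).comp hlim
  have hlw : Tendsto (fun n => w (φ n)) atTop (nhds w₀) :=
    (continuous_snd.tendsto _).comp hlim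
  have hinv : Tendsto (fun n => 1 / ((φ n : ℝ) + 1)) atTop (nhds 0) :=
    tendsto_one_div_add_atTop_nhds_zero_nat.comp hφ.tendsto_atTop
  have hlt0 : Tendsto (fun n => ‖y (φ n) - p (φ n)‖) atTop (nhds 0) :=
    squeeze_zero (fun n => norm_nonneg _) (fun n => hyp _) hinv
  have hp₀U := hFU hp₀
  have hC : ContDiffAt ℝ 2 u p₀ := hu.contDiffAt (hU.mem_nhds hp₀U)
  have hC1 : ContDiffAt ℝ 1 (fderiv ℝ u) p₀ := hC.fderiv_right (by norm_num)
  have hC2 : ContinuousAt (fderiv ℝ (fderiv ℝ u)) p₀ :=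
    (hC1.fderiv_right (m := 0) (by norm_num)).continuousAt
  -- The rescaled first-order terms converge to `du_{p₀}(w₀)`, which therefore vanishes.
  have hl1 : Tendsto (fun n => fderiv ℝ u (p (φ n)) (w (φ n))) atTop
      (nhds (fderiv ℝ u p₀ w₀)) := by
    have hc : ContinuousAt (fun q : Euc d × Euc d => fderiv ℝ u q.1 q.2) (p₀, w₀) :=
      ContinuousAt.clm_apply
        (ContinuousAt.comp (f := Prod.fst) (by exact hC1.continuousAt) continuousAt_fst)
        continuousAt_snd
    exact hc.tendsto.comp hlim
  have hscale : ∀ n, fderiv ℝ u (p n) (y n - p n) =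
      ‖y n - p n‖ * fderiv ℝ u (p n) (w n) := by
    intro n
    conv_lhs => rw [hyw n]
    simp
  have hle : fderiv ℝ u p₀ w₀ ≤ 0 := by
    refine le_of_tendsto' hl1 fun n => ?_
    have h := fderiv_nonpos hDo hDc hU hu hDU (hp (φ n)).1 (hFU (hp _))
      (by have := hp (φ n); rw [hF] at this; exact this.2) (hy (φ n))
    rw [hscale] at h
    exact nonpos_of_mul_nonpos_right h (hne _)
  have hlt' : ∀ n, -fderiv ℝ u (p n) (w n) < 1 / ((n:ℝ) + 1) * ‖y n - p n‖ := by
    intro n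
    have := hlt n
    rw [hscale] at this
    have h2 := hne n
    by_contra! h3
    nlinarith
  have hge : -fderiv ℝ u p₀ w₀ ≤ 0 := by
    have h0 := hinv.mul hlt0
    rw [mul_zero] at h0
    exact le_of_tendsto_of_tendsto' hl1.neg h0 fun n => (hlt' (φ n)).le
  have hzero : fderiv ℝ u p₀ w₀ = 0 := by linarith
  have hw₀ne : w₀ ≠ 0 := by
    rintro rfl
    simp at hw₀
  have hQ := hpos p₀ hp₀ w₀ hw₀ne hzero
  rw [hessQ_eq hU hu hp₀U] at hQ
  set a := fderiv ℝ (fderiv ℝ u) p₀ w₀ w₀ with ha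
  have hQc : ContinuousAt (fun q : Euc d × Euc d => fderiv ℝ (fderiv ℝ u) q.1 q.2 q.2)
      (p₀, w₀) := by
    have h1 : ContinuousAt (fun q : Euc d × Euc d => fderiv ℝ (fderiv ℝ u) q.1) (p₀, w₀) :=
      ContinuousAt.comp (f := Prod.fst) (by exact hC2) continuousAt_fst
    exact (h1.clm_apply continuousAt_snd).clm_apply continuousAt_snd
  have hev : ∀ᶠ q : Euc d × Euc d in nhds (p₀, w₀),
      a / 2 < fderiv ℝ (fderiv ℝ u) q.1 q.2 q.2 ∧ q.1 ∈ U :=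
    (hQc.eventually_const_lt (by simp only [← ha]; linarith)).and
      (continuousAt_fst.eventually_mem (hU.mem_nhds hp₀U))
  obtain ⟨η, hη, hball⟩ := Metric.eventually_nhds_iff.1 hev
  have e1 := (Metric.tendsto_nhds.1 hlp) (η / 2) (by linarith)
  have e2 := (Metric.tendsto_nhds.1 hlw) η hη
  have e3 := hlt0.eventually_lt_const (show (0:ℝ) < η / 2 by linarith)
  have e4 := hinv.eventually_lt_const (show (0:ℝ) < a / 4 by linarith)
  obtain ⟨n, h1, h2, h3, h4⟩ := (e1.and (e2.and (e3.and e4))).exists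
  set k := φ n
  set τ := ‖y k - p k‖ with hτ
  have hτ0 : 0 < τ := hne k
  have hb : ∀ s ∈ Icc (0:ℝ) 1, a / 2 < fderiv ℝ (fderiv ℝ u) (p k + s • (y k - p k)) (w k) (w k)
      ∧ p k + s • (y k - p k) ∈ U := by
    intro s hs
    refine hball (y := (p k + s • (y k - p k), w k)) ?_
    rw [Prod.dist_eq]
    refine max_lt ?_ h2
    have : dist (p k + s • (y k - p k)) (p k) ≤ τ := by
      rw [dist_eq_norm, add_sub_cancel_left, norm_smul, Real.norm_of_nonneg hs.1]
      exact mul_le_of_le_one_left (norm_nonneg _) hs.2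
    calc _ ≤ _ := dist_triangle _ (p k) _
      _ < _ := by simp only; linarith
  have hT := taylor_lower hU hu (p := p k) (w := y k - p k) (a := a / 2 * τ ^ 2)
    (fun s hs => (hb s hs).2) (by
      intro s hs
      have := (hb s hs).1
      have e : fderiv ℝ (fderiv ℝ u) (p k + s • (y k - p k)) (y k - p k) (y k - p k) =
          τ ^ 2 * fderiv ℝ (fderiv ℝ u) (p k + s • (y k - p k)) (w k) (w k) := by
        conv_lhs => enter [2]; rw [hyw k]
        conv_lhs => enter [1, 2]; rw [hyw k]
        simp only [map_smul, smul_apply, smul_eq_mul, ← hτ]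
        ring
      rw [e, mul_comm]
      exact mul_le_mul_of_nonneg_left this.le (by positivity))
  have hpk0 : u (p k) = 0 := by
    have := hp k
    rw [hF] at this; exact this.2
  have hyk : y k ∈ D ∩ U := ⟨hy k, by simpa using (hb 1 (by simp)).2⟩
  rw [hDU] at hyk
  rw [add_sub_cancel, hpk0] at hT
  have := hlt k
  have h5 : 1 / ((k:ℝ) + 1) * τ ^ 2 ≤ a / 4 * τ ^ 2 :=
    mul_le_mul_of_nonneg_right h4.le (by positivity)
  have := hyk.2
  linarith

/-! ### Uniform interior and exterior balls -/

/-- Uniform interior and exterior ball conditions, at the point of `Dᶜ` nearest to `x ∈ D`.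
This point is written `x + δ • n` with `n` the outer unit normal; the last two clauses say that
`D` contains the ball of radius `ρ`, and is contained in the ball of radius `C / 2`, tangent to
`∂D` at `x + δ • n`. -/
lemma exists_uniform_balls {d : ℕ} (hd : 3 ≤ d) {D : Set (Euc d)}
    (hD : IsStronglyConvexDomain D) :
    ∃ ρ > 0, ∃ C > 0, ∀ x ∈ D, ∃ (δ : ℝ) (n : Euc d), 0 < δ ∧ ‖n‖ = 1 ∧ ball x δ ⊆ D ∧
      (∀ y, ‖y - (x + δ • n)‖ ^ 2 < 2 * ρ * ⟪(x + δ • n) - y, n⟫ → y ∈ D) ∧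
      (∀ y ∈ D, ‖y - (x + δ • n)‖ ^ 2 ≤ C * ⟪(x + δ • n) - y, n⟫) := by
  obtain ⟨hDo, hDconn, hDb, hDc, U, u, hU, hFU, hu, hDU, hF, hdu, hpos⟩ := hD
  have : Nontrivial (Euc d) := by
    have : Nonempty (Fin d) := ⟨⟨0, by omega⟩⟩
    infer_instance
  have hFc : IsCompact (frontier D) :=
    (hDb.closure.isCompact_closure).of_isClosed_subset isClosed_frontier
      (frontier_subset_closure.trans subset_closure)
  have hcl : (Dᶜ).Nonempty := by
    rw [nonempty_compl]
    rintro rfl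
    exact NormedSpace.unbounded_univ ℝ (Euc d) hDb
  have hkey : ∀ x ∈ D, ∃ p ∈ frontier D, 0 < dist x p ∧ ball x (dist x p) ⊆ D := by
    intro x hx
    obtain ⟨p, hp, hpd⟩ := hDo.isClosed_compl.exists_infDist_eq_dist hcl x
    have hpos : 0 < dist x p := dist_pos.2 (by rintro rfl; exact hp hx)
    have hb : ball x (dist x p) ⊆ D := by
      rw [← hpd]; exact ball_infDist_compl_subset
    refine ⟨p, ⟨?_, by rw [hDo.interior_eq]; exact hp⟩, hpos, hb⟩
    have : p ∈ closure (ball x (dist x p)) := by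
      rw [closure_ball x hpos.ne', mem_closedBall, dist_comm]
    exact closure_mono hb this
  have hFne : (frontier D).Nonempty := by
    obtain ⟨x, hx⟩ := hDconn.nonempty
    obtain ⟨p, hp, -⟩ := hkey x hx
    exact ⟨p, hp⟩
  have hC1 : ContinuousOn (fderiv ℝ u) U :=
    hu.continuousOn_fderiv_of_isOpen hU (by norm_num)
  have hC2 : ContinuousOn (fderiv ℝ (fderiv ℝ u)) U :=
    (hu.fderiv_of_isOpen hU (m := 1) (by norm_num)).continuousOn_fderiv_of_isOpen hU (by norm_num)
  -- Two-sided bounds for the gradient on `∂D` and an upper bound for the Hessian near `∂D`.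
  obtain ⟨p₁, hp₁, hmin⟩ := hFc.exists_isMinOn hFne (hC1.mono hFU).norm
  obtain ⟨p₂, hp₂, hmax⟩ := hFc.exists_isMaxOn hFne (hC1.mono hFU).norm
  set m := ‖fderiv ℝ u p₁‖ with hm
  set M := ‖fderiv ℝ u p₂‖ with hM
  have hm0 : 0 < m := norm_pos_iff.2 (hdu p₁ hp₁)
  have hM0 : 0 < M := norm_pos_iff.2 (hdu p₂ hp₂)
  obtain ⟨ε, hε, hεU⟩ := hFc.exists_cthickening_subset_open hU hFU
  obtain ⟨L, hL⟩ : ∃ L, ∀ y ∈ cthickening ε (frontier D), ‖fderiv ℝ (fderiv ℝ u) y‖ ≤ L := by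
    have hk : IsCompact (cthickening ε (frontier D)) := hFc.cthickening
    have hcont : ContinuousOn (fun y => ‖fderiv ℝ (fderiv ℝ u) y‖) (cthickening ε (frontier D)) :=
      ContinuousOn.norm (E := Euc d →L[ℝ] Euc d →L[ℝ] ℝ) (hC2.mono hεU)
    obtain ⟨L, hL⟩ := hk.bddAbove_image hcont
    exact ⟨L, fun y hy => hL (mem_image_of_mem _ hy)⟩
  set L' := max L 1 with hL'
  have hL'0 : 0 < L' := lt_of_lt_of_le one_pos (le_max_right _ _)
  obtain ⟨c, hc, hext⟩ := exterior_local hDo hDb hDc hU hFU hu hDU hF hpos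
  obtain ⟨B, hB⟩ := hDb.exists_norm_le
  obtain ⟨B', hB'⟩ := hFc.isBounded.exists_norm_le
  set T := max (B + B') c with hT
  have hT0 : 0 < T := hc.trans_le (le_max_right _ _)
  have hTb : ∀ p ∈ frontier D, ∀ y ∈ D, ‖y - p‖ ≤ T := fun p hp y hy =>
    (norm_sub_le _ _).trans ((add_le_add (hB y hy) (hB' p hp)).trans (le_max_left _ _))
  -- The estimate near `p` propagates along rays from `p`, since `D` is convex.
  have hglob : ∀ p ∈ frontier D, ∀ y ∈ D,
      c ^ 2 / T * ‖y - p‖ ^ 2 ≤ - fderiv ℝ u p (y - p) := by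
    intro p hp y hy
    have hyT := hTb p hp y hy
    rcases le_or_gt ‖y - p‖ c with h | h
    · refine le_trans ?_ (hext p hp y hy h)
      refine mul_le_mul_of_nonneg_right ?_ (by positivity)
      rw [div_le_iff₀ hT0, sq]
      exact mul_le_mul_of_nonneg_left (le_max_right _ _) hc.le
    · have hyp : 0 < ‖y - p‖ := hc.trans h
      set s := c / ‖y - p‖ with hs
      have hs0 : 0 < s := by positivity
      have hs1 : s < 1 := by rw [hs, div_lt_one hyp]; exact h
      have hsD : p + s • (y - p) ∈ D := by
        have := hDc.combo_closure_interior_mem_interior hp.1 (by rwa [hDo.interior_eq])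
          (a := 1 - s) (b := s) (by linarith) hs0 (by ring)
        rw [hDo.interior_eq] at this
        convert this using 1
        module
      have hsn : ‖p + s • (y - p) - p‖ = c := by
        rw [add_sub_cancel_left, norm_smul, Real.norm_of_nonneg hs0.le, hs,
          div_mul_cancel₀ _ hyp.ne']
      have := hext p hp _ hsD hsn.le
      rw [hsn, add_sub_cancel_left, map_smul, smul_eq_mul, ← mul_neg] at this
      have h2 : s * (c ^ 2 / T * ‖y - p‖ ^ 2) ≤ c * c ^ 2 := by
        have : s * (c ^ 2 / T * ‖y - p‖ ^ 2) = c * c ^ 2 * (‖y - p‖ / T) := by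
          rw [hs]; field_simp
        rw [this]
        exact mul_le_of_le_one_right (by positivity) ((div_le_one hT0).2 hyT)
      exact le_of_mul_le_mul_left (h2.trans this) hs0
  refine ⟨min (ε / 2) (m / L'), by positivity, T * M / c ^ 2, by positivity, ?_⟩
  set ρ := min (ε / 2) (m / L') with hρ
  have hρ0 : 0 < ρ := by positivity
  intro x hx
  obtain ⟨p, hp, hδ, hb⟩ := hkey x hx
  set δ := dist x p with hδd
  set N : Euc d := (InnerProductSpace.toDual ℝ (Euc d)).symm (fderiv ℝ u p) with hN
  have hNi : ∀ w, fderiv ℝ u p w = ⟪N, w⟫ := fun w => by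
    rw [hN, InnerProductSpace.toDual_symm_apply]
  have hNn : ‖N‖ = ‖fderiv ℝ u p‖ := by rw [hN, LinearIsometryEquiv.norm_map]
  have hNm : m ≤ ‖N‖ := hNn ▸ hmin hp
  have hNM : ‖N‖ ≤ M := hNn ▸ hmax hp
  have hN0 : 0 < ‖N‖ := hm0.trans_le hNm
  have hpF := hp
  rw [hF] at hpF
  set n : Euc d := ‖N‖⁻¹ • N with hn
  have hn1 : ‖n‖ = 1 := by
    rw [hn, norm_smul, norm_inv, norm_norm, inv_mul_cancel₀ hN0.ne']
  have hNn' : N = ‖N‖ • n := by rw [hn, smul_smul, mul_inv_cancel₀ hN0.ne', one_smul]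
  have hNi' : ∀ w, fderiv ℝ u p w = ‖N‖ * ⟪w, n⟫ := fun w => by
    rw [hNi, real_inner_comm]
    conv_lhs => rw [hNn']
    rw [real_inner_smul_right]
  -- `p` is the point of the sphere around `x` extremal in the direction `n`.
  have hpx : p = x + δ • n := by
    have hle : fderiv ℝ u p (x + δ • n - p) ≤ 0 := by
      have hmem : x + δ • n ∈ closure D := by
        refine closure_mono hb ?_
        rw [closure_ball x hδ.ne', mem_closedBall, dist_eq_norm, add_sub_cancel_left, norm_smul,
          hn1, Real.norm_of_nonneg hδ.le, mul_one]
      have hclosed : IsClosed {y | fderiv ℝ u p (y - p) ≤ 0} :=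
        isClosed_le (by fun_prop) continuous_const
      exact (closure_minimal (fun y hy =>
        fderiv_nonpos hDo hDc hU hu hDU hp.1 hpF.1 hpF.2 hy) hclosed) hmem
    rw [hNi'] at hle
    have h1 : ⟪x + δ • n - p, n⟫ ≤ 0 := nonpos_of_mul_nonpos_right hle hN0
    have h2 : ⟪x + δ • n - p, n⟫ = δ - ⟪p - x, n⟫ := by
      rw [show x + δ • n - p = δ • n - (p - x) by abel, inner_sub_left, real_inner_smul_left,
        real_inner_self_eq_norm_sq, hn1]
      ring
    have h3 : ‖p - x‖ = δ := by rw [hδd, dist_comm, dist_eq_norm]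
    have h4 : ‖p - x - δ • n‖ ^ 2 ≤ 0 := by
      rw [norm_sub_sq_real, real_inner_smul_right, norm_smul, hn1, h3,
        Real.norm_of_nonneg hδ.le]
      nlinarith
    have h5 : p - x - δ • n = 0 := by
      rw [← norm_eq_zero]
      exact pow_eq_zero_iff (two_ne_zero) |>.1 (le_antisymm h4 (by positivity))
    rw [sub_sub, sub_eq_zero] at h5
    exact h5
  refine ⟨δ, n, hδ, hn1, hb, ?_, ?_⟩
  · rw [← hpx]
    intro y hy
    have hcs : ⟪p - y, n⟫ ≤ ‖y - p‖ := by
      have := real_inner_le_norm (p - y) n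
      rwa [hn1, mul_one, norm_sub_rev] at this
    have hyp : ‖y - p‖ < 2 * ρ := by
      by_contra! h
      have : 2 * ρ * ⟪p - y, n⟫ ≤ 2 * ρ * ‖y - p‖ :=
        mul_le_mul_of_nonneg_left hcs (by positivity)
      nlinarith [norm_nonneg (y - p)]
    have hypε : ‖y - p‖ ≤ ε := by
      have : ρ ≤ ε / 2 := min_le_left _ _
      linarith
    have hseg : ∀ s ∈ Icc (0:ℝ) 1, p + s • (y - p) ∈ cthickening ε (frontier D) := by
      intro s hs
      refine mem_cthickening_of_dist_le _ p _ _ hp ?_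
      rw [dist_eq_norm, add_sub_cancel_left, norm_smul, Real.norm_of_nonneg hs.1]
      exact (mul_le_of_le_one_left (norm_nonneg _) hs.2).trans hypε
    have hT := taylor_upper hU hu (p := p) (w := y - p) (a := L' * ‖y - p‖ ^ 2)
      (fun s hs => hεU (hseg s hs)) (by
        intro s hs
        refine (le_abs_self _).trans ?_
        rw [← Real.norm_eq_abs]
        refine (ContinuousLinearMap.le_opNorm₂ _ _ _).trans ?_
        rw [mul_assoc, ← sq]
        exact mul_le_mul_of_nonneg_right ((hL _ (hseg s hs)).trans (le_max_left _ _))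
          (by positivity))
    rw [add_sub_cancel, hpF.2, hNi', ← neg_sub p y, inner_neg_left, norm_neg] at hT
    rw [← neg_sub p y, norm_neg] at hy
    have hρL : ρ * L' ≤ m := by
      rw [← le_div_iff₀ hL'0]; exact min_le_right _ _
    have hi0 : 0 < ⟪p - y, n⟫ := by
      by_contra! h
      have : 2 * ρ * ⟪p - y, n⟫ ≤ 0 := mul_nonpos_of_nonneg_of_nonpos (by positivity) h
      nlinarith [sq_nonneg ‖p - y‖]
    have huy : u y < 0 := by
      have h1 : L' * ‖p - y‖ ^ 2 < L' * (2 * ρ * ⟪p - y, n⟫) := mul_lt_mul_of_pos_left hy hL'0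
      have h2 : ρ * L' * ⟪p - y, n⟫ ≤ ‖N‖ * ⟪p - y, n⟫ :=
        mul_le_mul_of_nonneg_right (hρL.trans hNm) hi0.le
      linarith
    have hyU : y ∈ U := by
      have := hεU (hseg 1 (by simp))
      simpa using this
    have : y ∈ D ∩ U := by rw [hDU]; exact ⟨hyU, huy⟩
    exact this.1
  · rw [← hpx]
    intro y hy
    have h := hglob p hp y hy
    rw [hNi', ← mul_neg, ← inner_neg_left, neg_sub] at h
    have hi0 : 0 ≤ ⟪p - y, n⟫ := by
      have : 0 ≤ ‖N‖ * ⟪p - y, n⟫ := le_trans (by positivity) h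
      exact nonneg_of_mul_nonneg_right this hN0
    have h2 : ‖N‖ * ⟪p - y, n⟫ ≤ M * ⟪p - y, n⟫ := mul_le_mul_of_nonneg_right hNM hi0
    have h3 := h.trans h2
    rw [div_mul_eq_mul_div, div_le_iff₀ hT0] at h3
    rw [div_mul_eq_mul_div, le_div_iff₀ (by positivity)]
    linarith

/-! ### Flat disks and half-chords -/

/-- The competitor is the affine map `z ↦ x + r • (z₀ • v + z₁ • w)`, which is conformal since `v`
and `w` are orthogonal of equal length. -/
lemma minMetric_le_of_flat_disk {d : ℕ} {D : Set (Euc d)} {x v w : Euc d} {r : ℝ} (hr : 0 < r)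
    (hvw : ⟪v, w⟫ = 0) (hn : ‖v‖ = ‖w‖)
    (hdisk : ∀ a b : ℝ, a ^ 2 + b ^ 2 < r ^ 2 → x + (a • v + b • w) ∈ D) :
    minMetric D x v ≤ 1 / r := by
  refine csInf_le ⟨0, ?_⟩ ⟨r, hr, rfl, ?_⟩
  · rintro c ⟨r, hr, rfl, -⟩
    positivity
  set Lf : Euc 2 →L[ℝ] Euc d :=
    (EuclideanSpace.proj (𝕜 := ℝ) (0 : Fin 2)).smulRight (r • v) +
      (EuclideanSpace.proj (𝕜 := ℝ) (1 : Fin 2)).smulRight (r • w) with hLf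
  have hLa : ∀ z : Euc 2, Lf z = z 0 • (r • v) + z 1 • (r • w) := fun z => by simp [hLf]
  have hp0 : pd 0 (fun z => x + Lf z) = fun _ => r • v := by
    ext1 z
    rw [pd, fderiv_const_add, ContinuousLinearMap.fderiv, hLa]
    simp
  have hp1 : pd 1 (fun z => x + Lf z) = fun _ => r • w := by
    ext1 z
    rw [pd, fderiv_const_add, ContinuousLinearMap.fderiv, hLa]
    simp
  refine ⟨fun z => x + Lf z, ⟨?_, ?_, ?_⟩, ?_, by simp, by rw [hp0]⟩
  · exact (contDiff_const.add Lf.contDiff).contDiffOn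
  · intro z _
    simp [hp0, hp1]
  · intro z _
    rw [hp0, hp1]
    refine ⟨by simp [norm_smul, hn], by simp [real_inner_smul_left, real_inner_smul_right, hvw]⟩
  · intro z hz
    have hz1 : z 0 ^ 2 + z 1 ^ 2 < 1 := by
      rw [unitDisk, mem_ball_zero_iff] at hz
      have h2 := EuclideanSpace.real_norm_sq_eq z
      rw [Fin.sum_univ_two] at h2
      rw [← h2]
      have := norm_nonneg z
      nlinarith
    have := hdisk (z 0 * r) (z 1 * r) (by nlinarith [pow_pos hr 2])
    simpa [hLa, smul_smul] using this

/-- This is where `3 ≤ d` is needed: a direction orthogonal to both `v` and the normal `n`. -/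
lemma exists_orthogonal {d : ℕ} (hd : 3 ≤ d) (v n : Euc d) :
    ∃ w : Euc d, ⟪v, w⟫ = 0 ∧ ⟪n, w⟫ = 0 ∧ ‖v‖ = ‖w‖ := by
  set K : Submodule ℝ (Euc d) := Submodule.span ℝ (({v, n} : Finset (Euc d)) : Set (Euc d)) with hK
  have hKr : Module.finrank ℝ K ≤ 2 := (finrank_span_finset_le_card _).trans Finset.card_le_two
  have hne : Kᗮ ≠ ⊥ := by
    intro h
    have h1 := K.finrank_add_finrank_orthogonal
    rw [h, finrank_bot, finrank_euclideanSpace_fin] at h1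
    omega
  obtain ⟨w, hw, hw0⟩ := Submodule.exists_mem_ne_zero_of_ne_bot hne
  have hv : ⟪v, w⟫ = 0 := hw v (Submodule.subset_span (by simp))
  have hn : ⟪n, w⟫ = 0 := hw n (Submodule.subset_span (by simp))
  have : ‖w‖ ≠ 0 := norm_ne_zero_iff.2 hw0
  refine ⟨(‖v‖ / ‖w‖) • w, by simp [real_inner_smul_right, hv],
    by simp [real_inner_smul_right, hn], ?_⟩
  rw [norm_smul, norm_div, norm_norm, norm_norm, div_mul_cancel₀ _ this]

lemma chordParam_pos {d : ℕ} {D : Set (Euc d)} (hDo : IsOpen D) (hDb : Bornology.IsBounded D)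
    {x v : Euc d} (hx : x ∈ D) (hv : v ≠ 0) : 0 < chordParam D x v := by
  obtain ⟨ε, hε, hball⟩ := Metric.isOpen_iff.1 hDo x hx
  have hv0 : 0 < ‖v‖ := norm_pos_iff.2 hv
  obtain ⟨B, hB⟩ := hDb.exists_norm_le
  have hne : {s : ℝ | 0 < s ∧ x + s • v ∉ D}.Nonempty := by
    have hB0 : 0 ≤ B := (norm_nonneg x).trans (hB x hx)
    refine ⟨(2 * B + 1) / ‖v‖, by positivity, fun h => ?_⟩
    have h1 := hB _ h
    have h2 : ‖((2 * B + 1) / ‖v‖) • v‖ = 2 * B + 1 := by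
      rw [norm_smul, Real.norm_of_nonneg (by positivity), div_mul_cancel₀ _ hv0.ne']
    have h3 := norm_sub_le (x + ((2 * B + 1) / ‖v‖) • v) x
    rw [add_sub_cancel_left, h2] at h3
    linarith [hB x hx]
  have hlb : ε / ‖v‖ ≤ chordParam D x v := by
    refine le_csInf hne fun s hs => ?_
    by_contra! h
    refine hs.2 (hball ?_)
    rw [mem_ball, dist_eq_norm, add_sub_cancel_left, norm_smul, Real.norm_of_nonneg hs.1.le]
    rwa [lt_div_iff₀ hv0] at h
  exact lt_of_lt_of_le (by positivity) hlb

lemma mem_of_lt_chordParam {d : ℕ} {D : Set (Euc d)} {x v : Euc d} {s : ℝ} (hs : 0 < s)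
    (h : s < chordParam D x v) : x + s • v ∈ D := by
  by_contra hc
  exact notMem_of_lt_csInf h ⟨0, fun t ht => ht.1.le⟩ ⟨hs, hc⟩

/-- The constant map is admissible for every `r > 0`. -/
lemma minMetric_zero {d : ℕ} {D : Set (Euc d)} {x : Euc d} (hx : x ∈ D) :
    minMetric D x 0 ≤ 0 := by
  refine le_of_forall_pos_le_add fun ε hε => ?_
  have := minMetric_le_of_flat_disk (D := D) (x := x) (v := 0) (w := 0) (r := 1 / ε)
    (by positivity) (by simp) rfl (by simpa using fun _ _ _ => hx)
  simpa using this

/-- A flat disk of radius a fixed fraction of the shorter half-chord, with one axis along `v` and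
the other orthogonal to both `v` and the normal, stays in `D`. -/
lemma minMetric_le_of_balls {d : ℕ} (hd : 3 ≤ d) {D : Set (Euc d)} {ρ C κ δ s : ℝ}
    {x v n : Euc d} (hC : 0 < C) (hκ0 : 0 < κ) (hκ : κ ≤ 1 / 4) (hκC : 6 * C * κ ≤ ρ)
    (hx : x ∈ D) (hδ : 0 < δ) (hn : ‖n‖ = 1) (hball : ball x δ ⊆ D)
    (hinner : ∀ y, ‖y - (x + δ • n)‖ ^ 2 < 2 * ρ * ⟪(x + δ • n) - y, n⟫ → y ∈ D)
    (hext : ∀ y ∈ D, ‖y - (x + δ • n)‖ ^ 2 ≤ C * ⟪(x + δ • n) - y, n⟫)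
    (hs : 0 < s) (hchord : ∀ t, 0 < t → t < s → x + t • v ∈ D ∧ x + t • (-v) ∈ D) :
    minMetric D x v ≤ 1 / (κ * s) := by
  have hnn : ⟪n, n⟫ = 1 := by rw [real_inner_self_eq_norm_sq, hn]; norm_num
  -- Expansion of both sides of the ball conditions at `y = x + q`.
  have e1 : ∀ q : Euc d, ⟪(x + δ • n) - (x + q), n⟫ = δ - ⟪q, n⟫ := fun q => by
    rw [add_sub_add_left_eq_sub, inner_sub_left, real_inner_smul_left, hnn, mul_one]
  have e2 : ∀ q : Euc d, ‖(x + q) - (x + δ • n)‖ ^ 2 = ‖q‖ ^ 2 - 2 * δ * ⟪q, n⟫ + δ ^ 2 :=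
    fun q => by
      rw [add_sub_add_left_eq_sub, norm_sub_sq_real, real_inner_smul_right, norm_smul, hn,
        Real.norm_of_nonneg hδ.le]
      ring
  have hδC : δ ≤ C := by
    have := hext (x + 0) (by simpa using hx)
    rw [e1, e2] at this
    simp at this
    nlinarith
  set β := |⟪v, n⟫| with hβ
  -- Constraints on the half-chord pointing towards the boundary.
  have hlt : ∀ t, 0 < t → t < s → t * β ≤ δ ∧ (t * ‖v‖) ^ 2 ≤ 3 * C * δ := by
    intro t ht hts
    obtain ⟨q, hq, hqn, hqv⟩ : ∃ q : Euc d, x + q ∈ D ∧ ⟪q, n⟫ = t * β ∧ ‖q‖ = t * ‖v‖ := by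
      rcases le_total 0 ⟪v, n⟫ with h | h
      · refine ⟨t • v, (hchord t ht hts).1, ?_, ?_⟩
        · rw [real_inner_smul_left, hβ, abs_of_nonneg h]
        · rw [norm_smul, Real.norm_of_nonneg ht.le]
      · refine ⟨t • (-v), (hchord t ht hts).2, ?_, ?_⟩
        · rw [real_inner_smul_left, inner_neg_left, hβ, abs_of_nonpos h]
        · rw [norm_smul, norm_neg, Real.norm_of_nonneg ht.le]
    have h := hext _ hq
    rw [e1, e2, hqn, hqv] at h
    have hb0 : 0 ≤ t * β := by positivity
    have h1 : t * β ≤ δ := by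
      have : 0 ≤ C * (δ - t * β) := by
        refine le_trans ?_ h
        rw [← hqn, ← hqv, ← e2]; positivity
      linarith [nonneg_of_mul_nonneg_right this hC]
    refine ⟨h1, ?_⟩
    nlinarith [mul_nonneg hC.le hb0, mul_le_mul_of_nonneg_left h1 hδ.le,
      mul_le_mul_of_nonneg_left hδC hδ.le]
  obtain ⟨w, hvw, hnw, hnorm⟩ := exists_orthogonal hd v n
  have hr : 0 < κ * s := by positivity
  refine minMetric_le_of_flat_disk hr hvw hnorm fun a b hab => ?_
  obtain ⟨hsβ, hsv⟩ : κ * s * β ≤ κ * δ ∧ (κ * s * ‖v‖) ^ 2 ≤ κ ^ 2 * (3 * C * δ) := by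
    have hlim1 : s * β ≤ δ ∧ (s * ‖v‖) ^ 2 ≤ 3 * C * δ := by
      have hcl : IsClosed {t : ℝ | t * β ≤ δ ∧ (t * ‖v‖) ^ 2 ≤ 3 * C * δ} :=
        IsClosed.and (isClosed_le (by fun_prop) (by fun_prop))
          (isClosed_le (by fun_prop) (by fun_prop))
      have hsub : Ioo 0 s ⊆ {t : ℝ | t * β ≤ δ ∧ (t * ‖v‖) ^ 2 ≤ 3 * C * δ} :=
        fun t ht => hlt t ht.1 ht.2
      have : s ∈ closure (Ioo 0 s) := by
        rw [closure_Ioo hs.ne]; exact ⟨hs.le, le_rfl⟩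
      exact closure_minimal hsub hcl this
    constructor
    · rw [mul_assoc]; exact mul_le_mul_of_nonneg_left hlim1.1 hκ0.le
    · rw [mul_assoc, mul_pow]; exact mul_le_mul_of_nonneg_left hlim1.2 (by positivity)
  set q := a • v + b • w with hq
  have hqn : ⟪q, n⟫ = a * ⟪v, n⟫ := by
    rw [hq, inner_add_left, real_inner_smul_left, real_inner_smul_left, real_inner_comm n w, hnw]
    ring
  have hqv : ‖q‖ ^ 2 = (a ^ 2 + b ^ 2) * ‖v‖ ^ 2 := by
    rw [hq, norm_add_sq_real, real_inner_smul_left, real_inner_smul_right, hvw, norm_smul,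
      norm_smul, ← hnorm, mul_pow, mul_pow, Real.norm_eq_abs, Real.norm_eq_abs, sq_abs, sq_abs]
    ring
  have ha : |a| ≤ κ * s := abs_le_of_sq_le_sq (by nlinarith [sq_nonneg b]) hr.le
  have hqn' : |⟪q, n⟫| ≤ κ * δ := by
    rw [hqn, abs_mul]
    exact (mul_le_mul_of_nonneg_right ha (abs_nonneg _)).trans hsβ
  have hκ2 : κ ^ 2 * (3 * C) ≤ ρ / 8 := by nlinarith [mul_pos hC hκ0]
  have hqv' : ‖q‖ ^ 2 ≤ ρ / 8 * δ := by
    rw [hqv]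
    calc (a ^ 2 + b ^ 2) * ‖v‖ ^ 2 ≤ (κ * s) ^ 2 * ‖v‖ ^ 2 :=
          mul_le_mul_of_nonneg_right hab.le (by positivity)
      _ = (κ * s * ‖v‖) ^ 2 := by ring
      _ ≤ κ ^ 2 * (3 * C * δ) := hsv
      _ = κ ^ 2 * (3 * C) * δ := by ring
      _ ≤ ρ / 8 * δ := mul_le_mul_of_nonneg_right hκ2 hδ.le
  have hρ : 0 < ρ := lt_of_lt_of_le (by positivity) hκC
  have hκδ : |⟪q, n⟫| ≤ δ / 4 := hqn'.trans (by nlinarith)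
  obtain ⟨h1, h2⟩ := abs_le.1 hκδ
  -- Near the boundary the disk lies in the interior ball of radius `ρ`; far from it, in `B(x, δ)`.
  rcases le_or_gt δ (ρ / 2) with h | h
  · apply hinner
    rw [e1, e2]
    nlinarith [mul_pos hδ hρ, mul_le_mul_of_nonneg_left h hδ.le,
      mul_le_mul_of_nonneg_left h2 hρ.le, mul_le_mul_of_nonneg_left h1 hδ.le]
  · apply hball
    rw [mem_ball, dist_eq_norm, add_sub_cancel_left]
    refine lt_of_pow_lt_pow_left₀ 2 hδ.le ?_
    nlinarith

/-! ### Comparison of the two metrics -/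

/-- In a strongly convex domain `D ⊆ ℝ^d` (`d ≥ 3`) the minimal metric
is dominated by a constant multiple of the Hilbert metric. -/
theorem minimal_le_const_mul_hilbert_of_strongly_convex
    (d : ℕ) (hd : 3 ≤ d) (D : Set (Euc d)) (hD : IsStronglyConvexDomain D) :
    ∃ A : ℝ, 1 ≤ A ∧ ∀ x ∈ D, ∀ v : Euc d,
      minMetric D x v ≤ A * hilbertFinsler D x v := by
  obtain ⟨ρ, hρ, C, hC, hballs⟩ := exists_uniform_balls hd hD
  obtain ⟨hDo, -, hDb, -⟩ := hD
  set κ := min (1 / 4) (ρ / (6 * C)) with hκ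
  have hκ0 : 0 < κ := by positivity
  have hκ4 : κ ≤ 1 / 4 := min_le_left _ _
  have hκC : 6 * C * κ ≤ ρ := by
    rw [mul_comm, ← le_div_iff₀ (by positivity)]; exact min_le_right _ _
  refine ⟨2 / κ, by rw [le_div_iff₀ hκ0]; linarith, fun x hx v => ?_⟩
  rcases eq_or_ne v 0 with rfl | hv
  · have h0 : hilbertFinsler D x 0 = 0 := by simp [hilbertFinsler, chordParam, hx]
    rw [h0, mul_zero]
    exact minMetric_zero hx
  obtain ⟨δ, n, hδ, hn, hb, hinner, hext⟩ := hballs x hx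
  have h1 := chordParam_pos hDo hDb hx hv
  have h2 := chordParam_pos hDo hDb hx (neg_ne_zero.2 hv)
  have hle := minMetric_le_of_balls hd hC hκ0 hκ4 hκC hx hδ hn hb hinner hext (lt_min h1 h2)
    (fun t ht hts => ⟨mem_of_lt_chordParam ht (hts.trans_le (min_le_left _ _)),
      mem_of_lt_chordParam ht (hts.trans_le (min_le_right _ _))⟩)
  refine hle.trans ?_
  have hmin : 1 / min (chordParam D x v) (chordParam D x (-v)) ≤
      1 / chordParam D x v + 1 / chordParam D x (-v) := by
    rcases min_choice (chordParam D x v) (chordParam D x (-v)) with h | h <;> rw [h]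
    · exact le_add_of_nonneg_right (by positivity)
    · exact le_add_of_nonneg_left (by positivity)
  calc 1 / (κ * min (chordParam D x v) (chordParam D x (-v)))
      = 1 / κ * (1 / min (chordParam D x v) (chordParam D x (-v))) := by rw [one_div_mul_one_div]
    _ ≤ 1 / κ * (1 / chordParam D x v + 1 / chordParam D x (-v)) :=
        mul_le_mul_of_nonneg_left hmin (by positivity)
    _ = 2 / κ * hilbertFinsler D x v := by unfold hilbertFinsler; ring
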